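/- Let G ⊂ ℝⁿ be open, Y a Banach space, and f : G → Y Gâteaux differentiable at every point of G. Then f is Fréchet differentiable at all points of G except a set that is nowhere dense and σ-porous. -/

import Mathlib

open Filter Metric Set Topology MeasureTheory

section CommonDefs
variable {X Y : Type*}

/-- `f` is (pointwise) Lipschitz at `x`:
`limsup_{y→x} ‖f y - f x‖/‖y - x‖ < ∞`. -/
def LipschitzAtPt [NormedAddCommGroup X] [NormedAddCommGroup Y]
    (f : X → Y) (x : X) : Prop :=
  ∃ K > (0:ℝ), ∃ δ > (0:ℝ), ∀ y ∈ ball x δ, ‖f y - f x‖ ≤ K * ‖y - x‖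

/-- The (two-sided) Hadamard directional derivative of `f` at `x` in direction `v` is `y`:
`(f (x + t z) - f x)/t → y` as `z → v`, `t → 0`, `t ≠ 0`. -/
def HadamardDerivAt [NormedAddCommGroup X] [NormedSpace ℝ X]
    [NormedAddCommGroup Y] [NormedSpace ℝ Y]
    (f : X → Y) (x v : X) (y : Y) : Prop :=
  Tendsto (fun p : ℝ × X => p.1⁻¹ • (f (x + p.1 • p.2) - f x))
    ((𝓝[≠] (0:ℝ)) ×ˢ 𝓝 v) (𝓝 y)

/-- The one-sided Hadamard directional derivative of `f` at `x` in direction `v` is `y`: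
`(f (x + t z) - f x)/t → y` as `z → v`, `t → 0+`. -/
def HadamardPlusDerivAt [NormedAddCommGroup X] [NormedSpace ℝ X]
    [NormedAddCommGroup Y] [NormedSpace ℝ Y]
    (f : X → Y) (x v : X) (y : Y) : Prop :=
  Tendsto (fun p : ℝ × X => p.1⁻¹ • (f (x + p.1 • p.2) - f x))
    ((𝓝[>] (0:ℝ)) ×ˢ 𝓝 v) (𝓝 y)

/-- `f` is Gâteaux differentiable at `x` with derivative the continuous linear map `L`. -/
def GateauxDiffAt [NormedAddCommGroup X] [NormedSpace ℝ X]
    [NormedAddCommGroup Y] [NormedSpace ℝ Y]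
    (f : X → Y) (x : X) (L : X →L[ℝ] Y) : Prop :=
  ∀ v : X, Tendsto (fun t : ℝ => t⁻¹ • (f (x + t • v) - f x)) (𝓝[≠] (0:ℝ)) (𝓝 (L v))

/-- `f` is Hadamard differentiable at `x` with derivative the continuous linear map `L`. -/
def HadamardDiffAt [NormedAddCommGroup X] [NormedSpace ℝ X]
    [NormedAddCommGroup Y] [NormedSpace ℝ Y]
    (f : X → Y) (x : X) (L : X →L[ℝ] Y) : Prop :=
  ∀ v : X, HadamardDerivAt f x v (L v)

/-- `A` is directionally porous at `x`. -/
def DirPorousAt [NormedAddCommGroup X] [NormedSpace ℝ X] (A : Set X) (x : X) : Prop :=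
  ∃ v : X, v ≠ 0 ∧ ∃ p > (0:ℝ), ∃ t : ℕ → ℝ, (∀ n, 0 < t n) ∧
    Tendsto t atTop (𝓝 (0:ℝ)) ∧ ∀ n, ball (x + t n • v) (p * t n) ∩ A = ∅

/-- `A` is a countable union of directionally porous sets. -/
def SigmaDirPorous [NormedAddCommGroup X] [NormedSpace ℝ X] (A : Set X) : Prop :=
  ∃ S : ℕ → Set X, A = ⋃ n, S n ∧ ∀ n, ∀ x ∈ S n, DirPorousAt (S n) x

/-- `A` is porous at `x`. -/
def PorousAt [NormedAddCommGroup X] (A : Set X) (x : X) : Prop :=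
  ∃ p > (0:ℝ), ∃ y : ℕ → X, (∀ n, y n ≠ x) ∧ Tendsto y atTop (𝓝 x) ∧
    ∀ n, ball (y n) (p * ‖y n - x‖) ∩ A = ∅

/-- `A` is a countable union of porous sets. -/
def SigmaPorous [NormedAddCommGroup X] (A : Set X) : Prop :=
  ∃ S : ℕ → Set X, A = ⋃ n, S n ∧ ∀ n, ∀ x ∈ S n, PorousAt (S n) x

end CommonDefs

/-! A Gâteaux differentiable `f` is Hadamard differentiable at `x`, hence Fréchet differentiable in
finite dimension, once `f (x + t z) - f (x + t v) = o(t)` as `t → 0` and `z → v`. Porosity enters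
twice. By a Baire category argument in the space of directions, every `x ∈ G` lies in one of
countably many sets on each of which `f` satisfies a uniform Lipschitz estimate along an open set of
directions. If that set is not porous at `x`, a cone of such directions issuing from a point of the
set near `x - s u` contains a ball around `x`, so `f` is Lipschitz at `x`. If then the set of points
where `f` is Lipschitz with the same constant is not porous at `x`, it has points within `o(t)` of
`x + t v`, and these compare `f (x + t z)` with `f (x + t v)`. This gives σ-porosity.

For nowhere density the same argument is run in the interiors of these sets, where they are not
porous. As `f` need not be continuous, the sets need not be closed; but they are closed along lines,
and in finite dimension this is enough for the union of the interiors to be dense, by induction on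
the dimension. -/

section Baire

variable {ι : Type*} [Countable ι]

theorem dense_iUnion_interior_of_isClosed_sections {S T : Type*} [TopologicalSpace S]
    [BaireSpace S] [TopologicalSpace T] [SecondCountableTopology T]
    {E : ι → Set (S × T)} (hclosed : ∀ i t, IsClosed {s | (s, t) ∈ E i})
    (hdense : ∀ s, Dense (⋃ i, interior {t | (s, t) ∈ E i})) :
    Dense (⋃ i, interior (E i)) := by
  let basis := TopologicalSpace.countableBasis T
  have hbasis : TopologicalSpace.IsTopologicalBasis basis :=
    TopologicalSpace.isBasis_countableBasis T
  have : Countable basis := (TopologicalSpace.countable_countableBasis T).to_subtype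
  refine (TopologicalSpace.isTopologicalBasis_opens.prod hbasis).dense_iff.2 ?_
  rintro _ ⟨U, hU, V, hV, rfl⟩ ⟨⟨s₀, t₀⟩, hs₀, ht₀⟩
  have hVo : IsOpen V := hbasis.isOpen hV
  let F : ι × {B : basis // B.1.Nonempty ∧ B.1 ⊆ V} → Set S :=
    fun q ↦ {s | ∀ t ∈ q.2.1.1, (s, t) ∈ E q.1}
  have hF_closed : ∀ q, IsClosed (F q) := fun q ↦ by
    simp only [F, ofPred_forall]
    exact isClosed_biInter fun t _ ↦ hclosed q.1 t
  have hF_cover : ⋃ q, F q = univ := by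
    refine eq_univ_of_forall fun s ↦ ?_
    obtain ⟨t, htV, ht⟩ := (hdense s).inter_open_nonempty V hVo ⟨t₀, ht₀⟩
    obtain ⟨i, hti⟩ := mem_iUnion.1 ht
    obtain ⟨B, hB, htB, hBsub⟩ :=
      hbasis.exists_subset_of_mem_open (mem_inter htV hti) (hVo.inter isOpen_interior)
    have hBV : B.Nonempty ∧ B ⊆ V := ⟨⟨t, htB⟩, hBsub.trans inter_subset_left⟩
    refine mem_iUnion_of_mem (i, ⟨⟨B, hB⟩, hBV⟩) fun t' ht' ↦ ?_
    exact interior_subset (s := {t | (s, t) ∈ E i}) (hBsub ht').2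
  obtain ⟨s, hsU, hs⟩ := (dense_iUnion_interior_of_closed hF_closed hF_cover).inter_open_nonempty
    U hU ⟨s₀, hs₀⟩
  obtain ⟨⟨i, ⟨B, hB⟩, ⟨t, ht⟩, hBV⟩, hsF⟩ := mem_iUnion.1 hs
  refine ⟨(s, t), ⟨hsU, hBV ht⟩, mem_iUnion.2 ⟨i, ?_⟩⟩
  have hbox : interior (F (i, ⟨⟨B, hB⟩, ⟨t, ht⟩, hBV⟩)) ×ˢ B ⊆ E i :=
    fun p hp ↦ interior_subset hp.1 p.2 hp.2
  exact interior_maximal hbox (isOpen_interior.prod (hbasis.isOpen hB)) ⟨hsF, ht⟩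

theorem dense_iUnion_interior_of_preimage_homeomorph {S T : Type*} [TopologicalSpace S]
    [TopologicalSpace T] (e : S ≃ₜ T) {ι : Type*} {E : ι → Set T}
    (h : Dense (⋃ i, interior (e ⁻¹' E i))) : Dense (⋃ i, interior (E i)) := by
  simp_rw [← e.preimage_interior, ← preimage_iUnion] at h
  exact (e.surjective.denseRange.dense_image e.continuous h).mono (image_preimage_subset _ _)

variable {X Z : Type*} [AddCommGroup X] [Module ℝ X] [AddCommGroup Z] [Module ℝ Z]

/-- `E` is closed along lines relative to `G`: a point of `G` belongs to `E` as soon as it is a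
limit, along some line, of points of `E`. The value `s = 0` is allowed, so that for `G = univ`
this says that the trace of `E` on every line is closed. -/
def IsLineClosedIn (G E : Set X) : Prop :=
  ∀ x ∈ G, ∀ v, (∃ᶠ s in 𝓝 (0 : ℝ), x + s • v ∈ E) → x ∈ E

namespace IsLineClosedIn

variable {E G : Set X}

theorem mono {G' : Set X} (hE : IsLineClosedIn G E) (h : G' ⊆ G) : IsLineClosedIn G' E :=
  fun x hx ↦ hE x (h hx)

theorem isClosed_line (hE : IsLineClosedIn univ E) (x v : X) :
    IsClosed {s : ℝ | x + s • v ∈ E} := by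
  refine isClosed_iff_frequently.2 fun s hs ↦ hE _ (mem_univ _) v ?_
  rw [← map_add_left_nhds_zero, frequently_map] at hs
  simpa only [mem_ofPred_eq, add_smul, ← add_assoc] using hs

theorem preimage {E : Set Z} (hE : IsLineClosedIn univ E) (A : X →ₗ[ℝ] Z) :
    IsLineClosedIn univ (A ⁻¹' E) :=
  fun x _ v h ↦ hE (A x) (mem_univ _) (A v) <| by
    simpa only [mem_preimage, map_add, map_smul] using h

theorem section_right {E : Set (X × Z)} (hE : IsLineClosedIn univ E) (x : X) :
    IsLineClosedIn univ {z | (x, z) ∈ E} :=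
  fun z _ v h ↦ hE (x, z) (mem_univ _) (0, v) <| by simpa using h

theorem isClosed_section_left {E : Set (ℝ × Z)} (hE : IsLineClosedIn univ E) (z : Z) :
    IsClosed {s | (s, z) ∈ E} := by
  simpa using hE.isClosed_line (0, z) (1, 0)

theorem union_compl [TopologicalSpace X] [ContinuousAdd X] [ContinuousSMul ℝ X]
    (hE : IsLineClosedIn G E) (hG : IsOpen G) : IsLineClosedIn univ (E ∪ Gᶜ) := by
  rintro x - v h
  by_cases hx : x ∈ G
  · have hline : Tendsto (fun s : ℝ ↦ x + s • v) (𝓝 0) (𝓝 x) :=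
      Continuous.tendsto' (by fun_prop) _ _ (by simp)
    refine Or.inl (hE x hx v ((h.and_eventually (hline (hG.mem_nhds hx))).mono ?_))
    exact fun s hs ↦ hs.1.resolve_right (not_not.2 hs.2)
  · exact Or.inr hx

theorem dense_iUnion_interior_pi (d : ℕ) {E : ι → Set (Fin d → ℝ)}
    (hE : ∀ i, IsLineClosedIn univ (E i)) (hcover : ⋃ i, E i = univ) :
    Dense (⋃ i, interior (E i)) := by
  induction d with
  | zero => simp only [(isOpen_discrete _).interior_eq, hcover, dense_univ]
  | succ d ih =>
    let e := Fin.consEquivL ℝ fun _ : Fin (d + 1) ↦ ℝ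
    have hE' : ∀ i, IsLineClosedIn univ (e ⁻¹' E i) := fun i ↦ (hE i).preimage e.toLinearMap
    refine dense_iUnion_interior_of_preimage_homeomorph e.toHomeomorph <|
      dense_iUnion_interior_of_isClosed_sections (fun i ↦ (hE' i).isClosed_section_left)
        fun s ↦ ih (fun i ↦ (hE' i).section_right s) <| eq_univ_of_forall fun t ↦ ?_
    obtain ⟨i, hi⟩ := mem_iUnion.1 (hcover.ge (mem_univ (e (s, t))))
    exact mem_iUnion.2 ⟨i, hi⟩

variable [TopologicalSpace X] [IsTopologicalAddGroup X] [ContinuousSMul ℝ X] [T2Space X]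
  [FiniteDimensional ℝ X]

theorem dense_iUnion_interior {E : ι → Set X} (hE : ∀ i, IsLineClosedIn univ (E i))
    (hcover : ⋃ i, E i = univ) : Dense (⋃ i, interior (E i)) := by
  let e := (Module.finBasis ℝ X).equivFunL.symm
  refine dense_iUnion_interior_of_preimage_homeomorph e.toHomeomorph <|
    dense_iUnion_interior_pi _ (fun i ↦ (hE i).preimage e.toLinearMap) ?_
  change ⋃ i, e ⁻¹' E i = univ
  rw [← preimage_iUnion, hcover, preimage_univ]

theorem subset_closure_iUnion_interior {E : ι → Set X} (hG : IsOpen G)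
    (hE : ∀ i, IsLineClosedIn G (E i)) (hcover : G ⊆ ⋃ i, E i) :
    G ⊆ closure (⋃ i, interior (E i)) := by
  cases isEmpty_or_nonempty ι
  · exact hcover.trans (by simp)
  have hcover' : ⋃ i, (E i ∪ Gᶜ) = univ := eq_univ_of_forall fun x ↦ by
    by_cases hx : x ∈ G
    · obtain ⟨i, hi⟩ := mem_iUnion.1 (hcover hx)
      exact mem_iUnion.2 ⟨i, Or.inl hi⟩
    · exact mem_iUnion.2 ⟨Classical.arbitrary ι, Or.inr hx⟩
  have hdense := dense_iUnion_interior (fun i ↦ (hE i).union_compl hG) hcover'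
  refine (hdense.open_subset_closure_inter hG).trans (closure_mono ?_)
  rintro x ⟨hxG, hx⟩
  obtain ⟨i, hi⟩ := mem_iUnion.1 hx
  refine mem_iUnion.2 ⟨i, interior_maximal ?_ (hG.inter isOpen_interior) ⟨hxG, hi⟩⟩
  exact fun y hy ↦ (interior_subset hy.2).resolve_right (not_not.2 hy.1)

end IsLineClosedIn

end Baire

section Porous

variable {X : Type*} [NormedAddCommGroup X] {A B : Set X} {x : X}

theorem porousAt_iff_frequently :
    PorousAt A x ↔ ∃ p > (0 : ℝ), ∃ᶠ y in 𝓝[≠] x, ball y (p * ‖y - x‖) ∩ A = ∅ := by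
  constructor
  · rintro ⟨p, hp, y, hne, hy, hA⟩
    exact ⟨p, hp, (tendsto_nhdsWithin_iff.2 ⟨hy, .of_forall hne⟩).frequently (.of_forall hA)⟩
  · rintro ⟨p, hp, h⟩
    obtain ⟨y, hy, hA⟩ :=
      exists_seq_forall_of_frequently (h.and_eventually eventually_mem_nhdsWithin)
    exact ⟨p, hp, y, fun n ↦ (hA n).2, tendsto_nhds_of_tendsto_nhdsWithin hy, fun n ↦ (hA n).1⟩

theorem PorousAt.mono (h : PorousAt B x) (hAB : A ⊆ B) : PorousAt A x := by
  obtain ⟨p, hp, y, hne, hy, hB⟩ := h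
  exact ⟨p, hp, y, hne, hy, fun n ↦
    subset_eq_empty (inter_subset_inter_right _ hAB) (hB n)⟩

theorem not_porousAt_of_mem_interior (hx : x ∈ interior A) : ¬ PorousAt A x := by
  rintro ⟨p, hp, y, hne, hy, hA⟩
  obtain ⟨n, hn⟩ := (hy.eventually (mem_interior_iff_mem_nhds.1 hx)).exists
  refine (hA n).le ⟨mem_ball_self ?_, hn⟩
  exact mul_pos hp (norm_pos_iff.2 (sub_ne_zero.2 (hne n)))

theorem SigmaPorous.of_forall_exists_porousAt {ι : Type*} [Countable ι] {T : ι → Set X}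
    (h : ∀ x ∈ A, ∃ i, x ∈ T i ∧ PorousAt (T i) x) : SigmaPorous A := by
  obtain ⟨code, hcode⟩ := exists_injective_nat ι
  refine ⟨fun n ↦ {x ∈ A | ∃ i, code i = n ∧ x ∈ T i ∧ PorousAt (T i) x}, ?_, ?_⟩
  · refine Subset.antisymm (fun x hx ↦ ?_) (iUnion_subset fun n ↦ sep_subset _ _)
    obtain ⟨i, hi⟩ := h x hx
    exact mem_iUnion.2 ⟨code i, hx, i, rfl, hi⟩
  · rintro n x ⟨-, i, rfl, -, hi⟩
    refine hi.mono ?_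
    rintro y ⟨-, j, hji, hj, -⟩
    exact hcode hji ▸ hj

theorem eventually_exists_mem_norm_sub_le_of_not_porousAt [NormedSpace ℝ X] (hx : x ∈ A)
    (hA : ¬ PorousAt A x) (v : X) {ε : ℝ} (hε : 0 < ε) :
    ∀ᶠ t in 𝓝 (0 : ℝ), ∃ z ∈ A, ‖z - (x + t • v)‖ ≤ ε * |t| := by
  have hnear : ∀ᶠ y in 𝓝[≠] x, (ball y (ε / (‖v‖ + 1) * ‖y - x‖) ∩ A).Nonempty := by
    simp only [porousAt_iff_frequently, not_exists, not_and, not_frequently,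
      ← nonempty_iff_ne_empty] at hA
    exact hA _ (by positivity)
  have hline : Tendsto (fun t : ℝ ↦ x + t • v) (𝓝 0) (𝓝 x) :=
    Continuous.tendsto' (by fun_prop) _ _ (by simp)
  filter_upwards [hline.eventually (eventually_nhdsWithin_iff.1 hnear)] with t ht
  rcases eq_or_ne (x + t • v) x with hxt | hxt
  · exact ⟨x, hx, by rw [hxt, sub_self, norm_zero]; positivity⟩
  obtain ⟨z, hz, hzA⟩ := ht hxt
  refine ⟨z, hzA, (mem_ball_iff_norm.1 hz).le.trans ?_⟩
  calc ε / (‖v‖ + 1) * ‖x + t • v - x‖ = ε * |t| * (‖v‖ / (‖v‖ + 1)) := by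
        rw [add_sub_cancel_left, norm_smul, Real.norm_eq_abs]; ring
    _ ≤ ε * |t| :=
        mul_le_of_le_one_right (by positivity) (div_le_one_of_le₀ (by simp) (by positivity))

end Porous

section Differentiability

variable {X Y : Type*} [NormedAddCommGroup X] [NormedSpace ℝ X]
  [NormedAddCommGroup Y] [NormedSpace ℝ Y] {f : X → Y} {x : X} {L : X →L[ℝ] Y}

theorem GateauxDiffAt.lineDifferentiableAt (h : GateauxDiffAt f x L) (v : X) :
    LineDifferentiableAt ℝ f x v :=
  (hasLineDerivAt_iff_tendsto_slope_zero.2 (h v)).lineDifferentiableAt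

theorem tendsto_line_of_lineDifferentiableAt {v : X} (h : LineDifferentiableAt ℝ f x v) :
    Tendsto (fun t : ℝ ↦ f (x + t • v)) (𝓝 0) (𝓝 (f x)) := by
  simpa using (HasDerivAt.continuousAt h.hasLineDerivAt).tendsto

theorem GateauxDiffAt.hadamardDiffAt_of_isLittleO (h : GateauxDiffAt f x L)
    (hv : ∀ v, (fun p : ℝ × X ↦ f (x + p.1 • p.2) - f (x + p.1 • v)) =o[𝓝 0 ×ˢ 𝓝 v] Prod.fst) :
    HadamardDiffAt f x L := by
  intro v
  have hle : 𝓝[≠] (0 : ℝ) ×ˢ 𝓝 v ≤ 𝓝 0 ×ˢ 𝓝 v := prod_mono_left _ nhdsWithin_le_nhds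
  have hsum := ((hv v).mono hle).tendsto_inv_smul_nhds_zero.add ((h v).comp tendsto_fst)
  rw [zero_add] at hsum
  refine hsum.congr fun p ↦ ?_
  rw [Function.comp_apply, ← smul_add, sub_add_sub_cancel]

theorem HadamardDiffAt.hasFDerivAt [ProperSpace X] (h : HadamardDiffAt f x L) :
    HasFDerivAt f L x := by
  rw [hasFDerivAt_iff_isLittleO, Asymptotics.isLittleO_iff]
  intro c hc
  have hdir : ∀ w ∈ sphere (0 : X) 1, ∀ᶠ p : ℝ × X in 𝓝[≠] 0 ×ˢ 𝓝 w,
      ‖p.1⁻¹ • (f (x + p.1 • p.2) - f x) - L p.2‖ < c := fun w _ ↦ by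
    have hL : Tendsto (fun p : ℝ × X ↦ L p.2) (𝓝[≠] 0 ×ˢ 𝓝 w) (𝓝 (L w)) :=
      (L.continuous.tendsto w).comp tendsto_snd
    have := ((h w).sub hL).norm
    rw [sub_self, norm_zero] at this
    exact this.eventually_lt_const hc
  have hunif : ∀ᶠ t in 𝓝[≠] (0 : ℝ), ∀ w ∈ sphere (0 : X) 1,
      ‖t⁻¹ • (f (x + t • w) - f x) - L w‖ < c := by
    have := (isCompact_sphere (0 : X) 1).mem_prod_nhdsSet_of_forall hdir
    exact (Eventually.curry this).mono fun t ht ↦ ht.self_of_nhdsSet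
  have hball : ∀ᶠ y in 𝓝[≠] x, ‖f y - f x - L (y - x)‖ ≤ c * ‖y - x‖ := by
    filter_upwards [((tendsto_norm_sub_self_nhdsNE x).mono_right
      (nhdsGT_le_nhdsNE 0)).eventually hunif, eventually_mem_nhdsWithin] with y hy hyx
    have hpos : 0 < ‖y - x‖ := norm_pos_iff.2 (sub_ne_zero.2 hyx)
    have := hy (‖y - x‖⁻¹ • (y - x)) (by simp [norm_smul, hpos.ne'])
    rw [smul_inv_smul₀ hpos.ne', add_sub_cancel, map_smul, ← smul_sub, norm_smul, norm_inv,
      norm_norm, inv_mul_lt_iff₀ hpos, mul_comm] at this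
    exact this.le
  filter_upwards [eventually_nhdsWithin_iff.1 hball] with y hy
  rcases eq_or_ne y x with rfl | hyx
  · simp
  · exact hy hyx

end Differentiability

section LipschitzAlong

variable {X Y : Type*} [NormedAddCommGroup X] [NormedSpace ℝ X] [NormedAddCommGroup Y]

/-- The points of `G` at which `f` satisfies a Lipschitz estimate along every direction of `V`.
For open `V` these are estimates on a cone; for `V` the closed unit ball, on a full neighbourhood.
The constant `K` bounds the slope and `1 / K` the scale on which the bound is required, so that
the sets increase with `K` and countably many of them suffice. -/
def lipschitzAlong (G : Set X) (f : X → Y) (K : ℝ) (V : Set X) : Set X :=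
  {z ∈ G | ∀ v ∈ V, ∀ t : ℝ, K * |t| < 1 → z + t • v ∈ G → ‖f (z + t • v) - f z‖ ≤ K * |t|}

variable {G V : Set X} {f : X → Y} {K : ℝ} {x : X}

theorem exists_nat_mem_lipschitzAlong {C : ℝ} (hx : x ∈ G)
    (h : ∀ᶠ t in 𝓝 (0 : ℝ), ∀ v ∈ V, x + t • v ∈ G → ‖f (x + t • v) - f x‖ ≤ C * |t|) :
    ∃ m : ℕ, x ∈ lipschitzAlong G f m V := by
  obtain ⟨δ, hδ, hball⟩ := Metric.eventually_nhds_iff.1 h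
  obtain ⟨m, hm⟩ := exists_nat_ge (max C δ⁻¹)
  refine ⟨m, hx, fun v hv t ht hG ↦ ?_⟩
  have htδ : |t| < δ := by
    have : δ⁻¹ * |t| < 1 :=
      (mul_le_mul_of_nonneg_right ((le_max_right _ _).trans hm) (abs_nonneg t)).trans_lt ht
    rwa [inv_mul_lt_iff₀ hδ, mul_one] at this
  exact (hball (by simpa using htδ) v hv hG).trans
    (mul_le_mul_of_nonneg_right ((le_max_left _ _).trans hm) (abs_nonneg t))

theorem exists_nat_mem_lipschitzAlong_singleton [NormedSpace ℝ Y] (hx : x ∈ G) {v : X}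
    (hv : LineDifferentiableAt ℝ f x v) : ∃ m : ℕ, x ∈ lipschitzAlong G f m {v} := by
  obtain ⟨C, hC⟩ := (HasDerivAt.isBigO_sub hv.hasLineDerivAt).bound
  refine exists_nat_mem_lipschitzAlong (C := C) hx (hC.mono fun t ht ↦ ?_)
  rintro _ rfl -
  simpa using ht

theorem norm_sub_le_of_mem_lipschitzAlong {y z u : X} {ρ s : ℝ}
    (hz : z ∈ lipschitzAlong G f K V) (hV : closedBall u ρ ⊆ V) (hy : y ∈ G) (hs : 0 ≤ s)
    (hKs : K * s < 1) (hyz : ‖y - (z + s • u)‖ ≤ ρ * s) : ‖f y - f z‖ ≤ K * s := by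
  rcases hs.eq_or_lt with rfl | hs
  · have : y = z := by simpa [sub_eq_zero] using hyz
    simp [this]
  have hline : z + s • (u + s⁻¹ • (y - (z + s • u))) = y := by
    rw [smul_add, smul_inv_smul₀ hs.ne']; abel
  have hdir : u + s⁻¹ • (y - (z + s • u)) ∈ V := hV <| by
    rw [mem_closedBall_iff_norm, add_sub_cancel_left, norm_smul, norm_inv,
      Real.norm_of_nonneg hs.le, inv_mul_le_iff₀ hs, mul_comm]
    exact hyz
  have := hz.2 _ hdir s (by rwa [abs_of_pos hs]) (by rwa [hline])
  rwa [hline, abs_of_pos hs] at this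

theorem mem_lipschitzAlong_singleton_of_frequently (hG : IsOpen G)
    (hf : ∀ x ∈ G, ∀ v, Tendsto (fun t : ℝ ↦ f (x + t • v)) (𝓝 0) (𝓝 (f x))) (hx : x ∈ G)
    {a v b : X} (h : ∃ᶠ s in 𝓝 (0 : ℝ), x + s • a ∈ lipschitzAlong G f K {v + s • b}) :
    x ∈ lipschitzAlong G f K {v} := by
  refine ⟨hx, ?_⟩
  simp only [mem_singleton_iff, forall_eq]
  intro t ht hxt
  have hline : ∀ s : ℝ, x + s • a + t • (v + s • b) = x + t • v + s • (a + t • b) := fun s ↦ by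
    module
  have hlim := (hf _ hxt (a + t • b)).sub (hf x hx a)
  have hmem : ∀ᶠ s in 𝓝 (0 : ℝ), x + t • v + s • (a + t • b) ∈ G :=
    (Continuous.tendsto' (by fun_prop) _ _ (by simp)).eventually (hG.mem_nhds hxt)
  refine mem_closedBall_zero_iff.1 (isClosed_closedBall.mem_of_frequently_of_tendsto ?_ hlim)
  refine (h.and_eventually hmem).mono fun s ⟨hs, hsG⟩ ↦ mem_closedBall_zero_iff.2 ?_
  rw [← hline] at hsG ⊢
  exact hs.2 _ rfl t ht hsG

theorem isLineClosedIn_lipschitzAlong (hG : IsOpen G)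
    (hf : ∀ x ∈ G, ∀ v, Tendsto (fun t : ℝ ↦ f (x + t • v)) (𝓝 0) (𝓝 (f x))) :
    IsLineClosedIn G (lipschitzAlong G f K V) := by
  refine fun x hx a h ↦ ⟨hx, fun v hv ↦ ?_⟩
  refine (mem_lipschitzAlong_singleton_of_frequently (a := a) (b := 0) hG hf hx ?_).2 v rfl
  refine h.mono fun s hs ↦ ⟨hs.1, ?_⟩
  rintro _ rfl
  simpa using hs.2 v hv

theorem isLineClosedIn_setOf_mem_lipschitzAlong_singleton (hG : IsOpen G)
    (hf : ∀ x ∈ G, ∀ v, Tendsto (fun t : ℝ ↦ f (x + t • v)) (𝓝 0) (𝓝 (f x))) (hx : x ∈ G) :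
    IsLineClosedIn univ {v | x ∈ lipschitzAlong G f K {v}} := by
  refine fun v _ b h ↦ mem_lipschitzAlong_singleton_of_frequently (a := 0) (b := b) hG hf hx ?_
  simpa using h

theorem exists_mem_lipschitzAlong_closedBall_of_not_porousAt
    (hx : x ∈ lipschitzAlong G f K V) (hV : IsOpen V) (hVne : V.Nonempty)
    (hpor : ¬ PorousAt (lipschitzAlong G f K V) x) :
    ∃ m : ℕ, x ∈ lipschitzAlong G f m (closedBall 0 1) := by
  obtain ⟨u, hu⟩ := hVne
  obtain ⟨ρ, hρ, hρV⟩ := nhds_basis_closedBall.mem_iff.1 (hV.mem_nhds hu)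
  -- `x` and all points within `ρ s / 2` of it lie in the cone of size `s` issuing from a point
  -- of the set close to `x - s u`
  have hapex : ∀ᶠ s in 𝓝 (0 : ℝ), K * s < 1 ∧
      ∃ z ∈ lipschitzAlong G f K V, ‖z - (x + s • -u)‖ ≤ ρ / 2 * |s| :=
    ((Continuous.tendsto' (by fun_prop) _ _ (mul_zero K)).eventually_lt_const one_pos).and
      (eventually_exists_mem_norm_sub_le_of_not_porousAt hx hpor (-u) (half_pos hρ))
  have hscale : Tendsto (fun t : ℝ ↦ 2 / ρ * |t|) (𝓝 0) (𝓝 0) :=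
    Continuous.tendsto' (by fun_prop) _ _ (by simp)
  refine exists_nat_mem_lipschitzAlong (C := 4 / ρ * K) hx.1 ?_
  filter_upwards [hscale.eventually hapex] with t ⟨hKs, z, hz, hzx⟩ v hv hG
  set s := 2 / ρ * |t| with hs
  have hs0 : 0 ≤ s := by positivity
  have hρs : ρ / 2 * s = |t| := by rw [hs]; field_simp
  have hxz : ‖x - (z + s • u)‖ ≤ |t| := by
    rw [abs_of_nonneg hs0, hρs] at hzx
    have : z + s • u - x = z - (x + s • -u) := by module
    rwa [norm_sub_rev, this]
  have htv : ‖t • v‖ ≤ |t| := by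
    rw [norm_smul, Real.norm_eq_abs]
    exact mul_le_of_le_one_right (abs_nonneg t) (mem_closedBall_zero_iff.1 hv)
  have hyz : ‖x + t • v - (z + s • u)‖ ≤ ρ * s := by
    rw [add_sub_right_comm]
    linarith [norm_add_le (x - (z + s • u)) (t • v)]
  calc ‖f (x + t • v) - f x‖ = ‖(f (x + t • v) - f z) - (f x - f z)‖ := by
        rw [sub_sub_sub_cancel_right]
    _ ≤ ‖f (x + t • v) - f z‖ + ‖f x - f z‖ := norm_sub_le _ _
    _ ≤ K * s + K * s := by
        gcongr
        · exact norm_sub_le_of_mem_lipschitzAlong hz hρV hG hs0 hKs hyz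
        · exact norm_sub_le_of_mem_lipschitzAlong hz hρV hx.1 hs0 hKs
            (hxz.trans (by linarith [abs_nonneg t]))
    _ = 4 / ρ * K * |t| := by rw [hs]; ring

theorem norm_sub_le_of_mem_lipschitzAlong_closedBall {y₁ y₂ z c : X} {r : ℝ}
    (hz : z ∈ lipschitzAlong G f K (closedBall 0 1)) (hzc : ‖z - c‖ ≤ r)
    (hy₁ : y₁ ∈ G) (hy₁c : ‖y₁ - c‖ ≤ r) (hy₂ : y₂ ∈ G) (hy₂c : ‖y₂ - c‖ ≤ r)
    (hKr : K * (2 * r) < 1) : ‖f y₁ - f y₂‖ ≤ 4 * r * K := by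
  have hr : 0 ≤ r := (norm_nonneg _).trans hzc
  have hz_bound : ∀ y ∈ G, ‖y - c‖ ≤ r → ‖f y - f z‖ ≤ K * (2 * r) := fun y hy hyc ↦
    norm_sub_le_of_mem_lipschitzAlong (u := 0) (ρ := 1) hz Subset.rfl hy (by positivity) hKr <| by
      rw [smul_zero, add_zero, ← sub_sub_sub_cancel_right y z c]
      linarith [norm_sub_le (y - c) (z - c)]
  calc ‖f y₁ - f y₂‖ = ‖(f y₁ - f z) - (f y₂ - f z)‖ := by rw [sub_sub_sub_cancel_right]
    _ ≤ ‖f y₁ - f z‖ + ‖f y₂ - f z‖ := norm_sub_le _ _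
    _ ≤ K * (2 * r) + K * (2 * r) := add_le_add (hz_bound y₁ hy₁ hy₁c) (hz_bound y₂ hy₂ hy₂c)
    _ = 4 * r * K := by ring

theorem isLittleO_sub_line_of_not_porousAt (hG : IsOpen G)
    (hx : x ∈ lipschitzAlong G f K (closedBall 0 1))
    (hpor : ¬ PorousAt (lipschitzAlong G f K (closedBall 0 1)) x) (v : X) :
    (fun p : ℝ × X ↦ f (x + p.1 • p.2) - f (x + p.1 • v)) =o[𝓝 0 ×ˢ 𝓝 v] Prod.fst := by
  have hcone : Tendsto (fun p : ℝ × X ↦ x + p.1 • p.2) (𝓝 0 ×ˢ 𝓝 v) (𝓝 x) := by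
    rw [← nhds_prod_eq]
    exact Continuous.tendsto' (by fun_prop) _ _ (by simp)
  have hline : Tendsto (fun t : ℝ ↦ x + t • v) (𝓝 0) (𝓝 x) :=
    Continuous.tendsto' (by fun_prop) _ _ (by simp)
  refine Asymptotics.isLittleO_iff.2 fun c hc ↦ ?_
  set ε := c / (4 * (|K| + 1)) with hε
  have hεpos : 0 < ε := by positivity
  have hKε : 4 * ε * K ≤ c :=
    calc 4 * ε * K ≤ 4 * ε * (|K| + 1) := by gcongr; linarith [le_abs_self K]
      _ = c := by rw [hε]; field_simp
  have hscale : ∀ᶠ t in 𝓝 (0 : ℝ), K * (2 * (ε * |t|)) < 1 :=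
    (Continuous.tendsto' (by fun_prop) _ _ (by simp)).eventually_lt_const one_pos
  filter_upwards [tendsto_fst.eventually hscale,
    tendsto_fst.eventually (hline.eventually (hG.mem_nhds hx.1)),
    hcone.eventually (hG.mem_nhds hx.1),
    tendsto_fst.eventually (eventually_exists_mem_norm_sub_le_of_not_porousAt hx hpor v hεpos),
    tendsto_snd.eventually (closedBall_mem_nhds v hεpos)] with ⟨t, w⟩ hKt hvG hwG ⟨z, hz, hzv⟩ hw
  have hwv : ‖x + t • w - (x + t • v)‖ ≤ ε * |t| := by
    rw [add_sub_add_left_eq_sub, ← smul_sub, norm_smul, Real.norm_eq_abs, mul_comm]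
    gcongr
    exact mem_closedBall_iff_norm.1 hw
  have hvv : ‖x + t • v - (x + t • v)‖ ≤ ε * |t| := by
    rw [sub_self, norm_zero]
    positivity
  calc ‖f (x + t • w) - f (x + t • v)‖ ≤ 4 * (ε * |t|) * K :=
        norm_sub_le_of_mem_lipschitzAlong_closedBall hz hzv hwG hwv hvG hvv hKt
    _ = 4 * ε * K * |t| := by ring
    _ ≤ c * |t| := mul_le_mul_of_nonneg_right hKε (abs_nonneg t)

end LipschitzAlong

section FiniteDimensional

variable {X Y : Type*} [NormedAddCommGroup X] [NormedSpace ℝ X] [FiniteDimensional ℝ X]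
  [NormedAddCommGroup Y] [NormedSpace ℝ Y] {G : Set X} {f : X → Y} {x : X}

theorem GateauxDiffAt.hasFDerivAt_of_not_porousAt {K : ℝ} {L : X →L[ℝ] Y}
    (hL : GateauxDiffAt f x L) (hG : IsOpen G) (hx : x ∈ lipschitzAlong G f K (closedBall 0 1))
    (hpor : ¬ PorousAt (lipschitzAlong G f K (closedBall 0 1)) x) : HasFDerivAt f L x :=
  have := FiniteDimensional.proper ℝ X
  (hL.hadamardDiffAt_of_isLittleO (isLittleO_sub_line_of_not_porousAt hG hx hpor)).hasFDerivAt

theorem exists_mem_basis_mem_lipschitzAlong {b : Set (Set X)}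
    (hb : TopologicalSpace.IsTopologicalBasis b) (hG : IsOpen G)
    (hf : ∀ x ∈ G, ∀ v, LineDifferentiableAt ℝ f x v) (hx : x ∈ G) :
    ∃ m : ℕ, ∃ V ∈ b, V.Nonempty ∧ x ∈ lipschitzAlong G f m V := by
  have hdense : Dense (⋃ m : ℕ, interior {v | x ∈ lipschitzAlong G f m {v}}) :=
    IsLineClosedIn.dense_iUnion_interior
      (fun m ↦ isLineClosedIn_setOf_mem_lipschitzAlong_singleton hG
        (fun y hy v ↦ tendsto_line_of_lineDifferentiableAt (hf y hy v)) hx)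
      (eq_univ_of_forall fun v ↦
        mem_iUnion.2 (exists_nat_mem_lipschitzAlong_singleton hx (hf x hx v)))
  obtain ⟨v, hv⟩ := hdense.nonempty
  obtain ⟨m, hm⟩ := mem_iUnion.1 hv
  obtain ⟨V, hV, hvV, hVsub⟩ := hb.exists_subset_of_mem_open hm isOpen_interior
  exact ⟨m, V, hV, ⟨v, hvV⟩, hx, fun w hw ↦ (interior_subset (hVsub hw)).2 w rfl⟩

theorem subset_closure_iUnion_interior_lipschitzAlong (hG : IsOpen G)
    (hf : ∀ x ∈ G, ∀ v, LineDifferentiableAt ℝ f x v) :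
    G ⊆ closure (⋃ m : ℕ, interior (lipschitzAlong G f m (closedBall 0 1))) := by
  have := FiniteDimensional.proper ℝ X
  let b := TopologicalSpace.countableBasis X
  have hb : TopologicalSpace.IsTopologicalBasis b := TopologicalSpace.isBasis_countableBasis X
  have : Countable b := (TopologicalSpace.countable_countableBasis X).to_subtype
  have hclosed : ∀ (m : ℕ) V, IsLineClosedIn G (lipschitzAlong G f m V) := fun m V ↦
    isLineClosedIn_lipschitzAlong hG fun x hx v ↦ tendsto_line_of_lineDifferentiableAt (hf x hx v)
  let D := ⋃ q : ℕ × {V : b // V.1.Nonempty}, interior (lipschitzAlong G f q.1 q.2.1)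
  have hDopen : IsOpen D := isOpen_iUnion fun _ ↦ isOpen_interior
  have hDG : D ⊆ G := iUnion_subset fun _ ↦ interior_subset.trans (sep_subset _ _)
  have hGD : G ⊆ closure D := by
    refine IsLineClosedIn.subset_closure_iUnion_interior hG (fun _ ↦ hclosed _ _) fun x hx ↦ ?_
    obtain ⟨m, V, hV, hVne, hxV⟩ := exists_mem_basis_mem_lipschitzAlong hb hG hf hx
    exact mem_iUnion.2 ⟨(m, ⟨⟨V, hV⟩, hVne⟩), hxV⟩
  refine hGD.trans (closure_minimal ?_ isClosed_closure)
  refine IsLineClosedIn.subset_closure_iUnion_interior hDopen (fun m ↦ (hclosed m _).mono hDG)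
    fun x hx ↦ ?_
  obtain ⟨⟨m, ⟨V, hV⟩, hVne⟩, hxV⟩ := mem_iUnion.1 hx
  exact mem_iUnion.2 <| exists_mem_lipschitzAlong_closedBall_of_not_porousAt (interior_subset hxV)
    (hb.isOpen hV) hVne (not_porousAt_of_mem_interior hxV)

theorem isNowhereDense_setOf_not_differentiableAt (hG : IsOpen G)
    (hf : ∀ x ∈ G, ∃ L : X →L[ℝ] Y, GateauxDiffAt f x L) :
    IsNowhereDense {x ∈ G | ¬ DifferentiableAt ℝ f x} := by
  let U := ⋃ m : ℕ, interior (lipschitzAlong G f m (closedBall 0 1))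
  have hU : IsOpen U := isOpen_iUnion fun _ ↦ isOpen_interior
  have hGU : G ⊆ closure U := subset_closure_iUnion_interior_lipschitzAlong hG fun x hx v ↦
    let ⟨_, hL⟩ := hf x hx; hL.lineDifferentiableAt v
  have hdiff : ∀ x ∈ U, DifferentiableAt ℝ f x := fun x hx ↦ by
    obtain ⟨m, hm⟩ := mem_iUnion.1 hx
    have hxm := interior_subset hm
    obtain ⟨L, hL⟩ := hf x hxm.1
    exact (hL.hasFDerivAt_of_not_porousAt hG hxm (not_porousAt_of_mem_interior hm)).differentiableAt
  have hfrontier : IsNowhereDense (frontier U) := by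
    rw [isClosed_frontier.isNowhereDense_iff, ← frontier_compl, interior_frontier hU.isClosed_compl]
  refine hfrontier.mono fun x hx ↦ ?_
  rw [hU.frontier_eq]
  exact ⟨hGU hx.1, fun hxU ↦ hx.2 (hdiff x hxU)⟩

theorem sigmaPorous_setOf_not_differentiableAt (hG : IsOpen G)
    (hf : ∀ x ∈ G, ∃ L : X →L[ℝ] Y, GateauxDiffAt f x L) :
    SigmaPorous {x ∈ G | ¬ DifferentiableAt ℝ f x} := by
  have := FiniteDimensional.proper ℝ X
  let b := TopologicalSpace.countableBasis X
  have hb : TopologicalSpace.IsTopologicalBasis b := TopologicalSpace.isBasis_countableBasis X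
  have : Countable b := (TopologicalSpace.countable_countableBasis X).to_subtype
  let T : (ℕ × b) ⊕ ℕ → Set X := Sum.elim (fun q ↦ lipschitzAlong G f q.1 q.2)
    fun m ↦ lipschitzAlong G f m (closedBall 0 1)
  refine SigmaPorous.of_forall_exists_porousAt (T := T) ?_
  rintro x ⟨hxG, hx⟩
  obtain ⟨m, V, hV, hVne, hxV⟩ := exists_mem_basis_mem_lipschitzAlong hb hG
    (fun y hy v ↦ let ⟨_, hL⟩ := hf y hy; hL.lineDifferentiableAt v) hxG
  by_cases hcone : PorousAt (lipschitzAlong G f m V) x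
  · exact ⟨.inl (m, ⟨V, hV⟩), hxV, hcone⟩
  obtain ⟨k, hk⟩ :=
    exists_mem_lipschitzAlong_closedBall_of_not_porousAt hxV (hb.isOpen hV) hVne hcone
  refine ⟨.inr k, hk, not_not.1 fun hball ↦ hx ?_⟩
  obtain ⟨L, hL⟩ := hf x hxG
  exact (hL.hasFDerivAt_of_not_porousAt hG hk hball).differentiableAt

theorem stmt17_general (hG : IsOpen G) (hf : ∀ x ∈ G, ∃ L : X →L[ℝ] Y, GateauxDiffAt f x L) :
    IsNowhereDense {x ∈ G | ¬ DifferentiableAt ℝ f x} ∧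
      SigmaPorous {x ∈ G | ¬ DifferentiableAt ℝ f x} :=
  ⟨isNowhereDense_setOf_not_differentiableAt hG hf, sigmaPorous_setOf_not_differentiableAt hG hf⟩

end FiniteDimensional

theorem stmt17 {n : ℕ} {Y : Type*} [NormedAddCommGroup Y] [NormedSpace ℝ Y] [CompleteSpace Y]
    (G : Set (EuclideanSpace ℝ (Fin n))) (hG : IsOpen G)
    (f : EuclideanSpace ℝ (Fin n) → Y)
    (hGat : ∀ x ∈ G, ∃ L : EuclideanSpace ℝ (Fin n) →L[ℝ] Y, GateauxDiffAt f x L) :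
    ∃ A : Set (EuclideanSpace ℝ (Fin n)), IsNowhereDense A ∧ SigmaPorous A ∧
      ∀ x ∈ G \ A, ∃ L : EuclideanSpace ℝ (Fin n) →L[ℝ] Y, HasFDerivAt f L x := by
  obtain ⟨hnowhere, hporous⟩ := stmt17_general hG hGat
  exact ⟨_, hnowhere, hporous, fun x hx ↦ not_not.1 fun h ↦ hx.2 ⟨hx.1, h⟩⟩
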